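/- arXiv:1503.04641 — 2 statements merged into one kernel-verified Lean document; each statement's English description precedes it below -/
import Mathlib

section
/- Let λ₁ < λ₂ be real numbers with λ₁ > 0, let f(t) = λ₁ + (λ₂ − λ₁)·(2·arctan t + π)/(2π), and define the spiral curve σ : ℝ → ℝ² by σ(t) = (f(t)·cos t, f(t)·sin t). Then σ is injective; that is, the spiralling asymptotic boundary curve is an embedded (non-self-intersecting) curve. -/
/-!
The norm of `σ t` is `|f t|`, so a polar curve whose distance to the origin is an injective function
of the parameter cannot meet itself, whatever its angle does. For the spiral this distance is `f t`
itself, a positive, strictly increasing affine function of `arctan t`.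
-/

open Real

theorem norm_eq_abs_of_polar {v : EuclideanSpace ℝ (Fin 2)} {r θ : ℝ}
    (hv : v = ![r * cos θ, r * sin θ]) : ‖v‖ = |r| := by
  have norm_sq : ‖v‖ ^ 2 = r ^ 2 := by
    calc ‖v‖ ^ 2 = (r * cos θ) ^ 2 + (r * sin θ) ^ 2 := by
          simp [EuclideanSpace.real_norm_sq_eq, hv]
      _ = r ^ 2 := by linear_combination r ^ 2 * cos_sq_add_sin_sq θ
  rwa [← abs_norm, ← sq_eq_sq_iff_abs_eq_abs]

theorem spiral_injective_general {ι : Type*} {r θ : ι → ℝ}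
    (hr : Function.Injective fun t ↦ |r t|) {σ : ι → EuclideanSpace ℝ (Fin 2)}
    (hσ : ∀ t, σ t = ![r t * cos (θ t), r t * sin (θ t)]) : Function.Injective σ := by
  have norm_comp : norm ∘ σ = fun t ↦ |r t| := funext fun t ↦ norm_eq_abs_of_polar (hσ t)
  exact .of_comp (f := norm) (norm_comp ▸ hr)

/-- The radius, as a function of the angle, of the spiral that winds from the circle of radius `a`
(as `t → -∞`) to the circle of radius `b` (as `t → ∞`). -/
noncomputable def spiralProfile (a b t : ℝ) : ℝ :=
  a + (b - a) * (2 * arctan t + π) / (2 * π)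

section spiralProfile

variable {a b : ℝ}

theorem spiralProfile_strictMono (hab : a < b) : StrictMono (spiralProfile a b) := by
  intro s t hst
  have : 0 < b - a := sub_pos.2 hab
  have arctan_lt : arctan s < arctan t := arctan_strictMono hst
  unfold spiralProfile
  gcongr

theorem left_lt_spiralProfile (hab : a < b) (t : ℝ) : a < spiralProfile a b t := by
  have angle_pos : 0 < 2 * arctan t + π := by linarith [neg_pi_div_two_lt_arctan t]
  exact lt_add_of_pos_right a (div_pos (mul_pos (sub_pos.2 hab) angle_pos) two_pi_pos)

theorem abs_spiralProfile_injective (ha : 0 ≤ a) (hab : a < b) :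
    Function.Injective fun t ↦ |spiralProfile a b t| := by
  have abs_eq (t : ℝ) : |spiralProfile a b t| = spiralProfile a b t :=
    abs_of_nonneg (ha.trans (left_lt_spiralProfile hab t).le)
  simpa only [abs_eq] using (spiralProfile_strictMono hab).injective

end spiralProfile

/-- For `0 < λ₁ < λ₂`, the spiral
`σ t = (f t * cos t, f t * sin t)` in the Euclidean plane, where
`f t = λ₁ + (λ₂ − λ₁) * (2 * arctan t + π) / (2 * π)`, is an injective
(non-self-intersecting) curve. -/
theorem spiral_injective (lam1 lam2 : ℝ) (h1 : 0 < lam1) (hlt : lam1 < lam2)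
    (f : ℝ → ℝ)
    (hf : ∀ t : ℝ, f t = lam1 + (lam2 - lam1) * (2 * Real.arctan t + π) / (2 * π))
    (σ : ℝ → EuclideanSpace ℝ (Fin 2))
    (hσ : ∀ t : ℝ, σ t = ![f t * Real.cos t, f t * Real.sin t]) :
    Function.Injective σ := by
  obtain rfl : f = spiralProfile lam1 lam2 := funext hf
  exact spiral_injective_general (abs_spiralProfile_injective h1.le hlt) hσ
end

section
/- Let λ₁ < λ₂ be real numbers with λ₁ > 0, let f(t) = λ₁ + (λ₂ − λ₁)·(2·arctan t + π)/(2π), let σ(t) = (f(t)·cos t, f(t)·sin t), and let A = {x ∈ ℝ² : λ₁ < ‖x‖ < λ₂} be the open annulus. Then σ, viewed as a map from ℝ into A, is a closed topological embedding: it is injective, continuous, a homeomorphism onto its image, and its image σ(ℝ) is a closed subset of A. In particular the spiral is properly embedded in the open annulus A. -/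
/-!
The radius `‖σ t‖ = f t` increases strictly from `λ₁` to `λ₂`, so it maps `ℝ` homeomorphically onto
`(λ₁, λ₂)`, in particular by a closed embedding. If a composite `ψ ∘ φ` of continuous maps is a
closed embedding and the space in between is Hausdorff, then `φ` is a closed embedding. Apply this
to `σ : ℝ → A` followed by `‖·‖ : A → (λ₁, λ₂)`; the angle of `σ t` enters only through the
continuity of `σ`.
-/

open Real Set

open Filter Topology

section ClosedEmbedding

variable {X Y Z : Type*} [TopologicalSpace X] [TopologicalSpace Y] [TopologicalSpace Z]

theorem isClosedEmbedding_of_comp [T2Space Y] {f : X → Y} {g : Y → Z} (hf : Continuous f)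
    (hg : Continuous g) (hgf : IsClosedEmbedding (g ∘ f)) : IsClosedEmbedding f :=
  .of_continuous_injective_isClosedMap hf hgf.injective.of_comp
    (isProperMap_of_comp_of_t2 hf hg hgf.isProperMap).isClosedMap

theorem isClosedEmbedding_codRestrict_preimage [T2Space Y] {f : X → Y} {g : Y → Z} {s : Set Z}
    (hf : Continuous f) (hg : ContinuousOn g (g ⁻¹' s)) (hs : ∀ x, g (f x) ∈ s)
    (hgf : IsClosedEmbedding (s.codRestrict (g ∘ f) hs)) :
    IsClosedEmbedding ((g ⁻¹' s).codRestrict f hs) :=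
  isClosedEmbedding_of_comp (hf.codRestrict hs) (hg.mapsToRestrict (mapsTo_preimage g s)) hgf

end ClosedEmbedding

section StrictMono

variable {α β : Type*} [LinearOrder α] [NoMinOrder α] [NoMaxOrder α]
  [LinearOrder β] [TopologicalSpace β] [OrderTopology β] {f : α → β} {a b : β}

theorem mem_Ioo_of_strictMono_of_tendsto (hf : StrictMono f) (hbot : Tendsto f atBot (𝓝 a))
    (htop : Tendsto f atTop (𝓝 b)) (t : α) : f t ∈ Ioo a b := by
  obtain ⟨s, hst⟩ := exists_lt t
  obtain ⟨u, htu⟩ := exists_gt t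
  exact ⟨(hf.monotone.le_of_tendsto hbot s).trans_lt (hf hst),
    (hf htu).trans_le (hf.monotone.ge_of_tendsto htop u)⟩

variable [Nonempty α] [TopologicalSpace α] [PreconnectedSpace α]

theorem range_eq_Ioo_of_strictMono_of_tendsto (hf : StrictMono f) (hfc : Continuous f)
    (hbot : Tendsto f atBot (𝓝 a)) (htop : Tendsto f atTop (𝓝 b)) : range f = Ioo a b := by
  refine (range_subset_iff.2 (mem_Ioo_of_strictMono_of_tendsto hf hbot htop)).antisymm ?_
  rw [← image_univ]
  exact isPreconnected_univ.intermediate_value_Ioo (by simp) (by simp) hfc.continuousOn hbot htop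

theorem isClosedEmbedding_codRestrict_Ioo_of_strictMono [OrderTopology α] (hf : StrictMono f)
    (hfc : Continuous f) (hbot : Tendsto f atBot (𝓝 a)) (htop : Tendsto f atTop (𝓝 b)) :
    IsClosedEmbedding
      ((Ioo a b).codRestrict f (mem_Ioo_of_strictMono_of_tendsto hf hbot htop)) := by
  have hrange : range f = Ioo a b := range_eq_Ioo_of_strictMono_of_tendsto hf hfc hbot htop
  have hemb : IsEmbedding f := hf.isEmbedding_of_ordConnected (hrange ▸ ordConnected_Ioo)
  refine ⟨hemb.codRestrict _ _, ?_⟩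
  rw [((surjective_codRestrict _).2 hrange).range_eq]
  exact isClosed_univ

end StrictMono

theorem spiral_closedEmbedding_in_annulus_general {α E : Type*} [LinearOrder α] [Nonempty α]
    [NoMinOrder α] [NoMaxOrder α] [TopologicalSpace α] [PreconnectedSpace α] [OrderTopology α]
    [NormedAddCommGroup E] {a b : ℝ} {σ : α → E} (hσ : Continuous σ)
    (hmono : StrictMono fun t => ‖σ t‖) (hbot : Tendsto (fun t => ‖σ t‖) atBot (𝓝 a))
    (htop : Tendsto (fun t => ‖σ t‖) atTop (𝓝 b)) {A : Set E}
    (hA : A = {x : E | a < ‖x‖ ∧ ‖x‖ < b}) :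
    (∀ t : α, σ t ∈ A) ∧
      Function.Injective σ ∧
      Continuous σ ∧
      Topology.IsEmbedding σ ∧
      IsClosed ((Subtype.val : A → E) ⁻¹' Set.range σ) := by
  obtain rfl : A = norm ⁻¹' Ioo a b := hA
  have hmem : ∀ t, σ t ∈ norm ⁻¹' Ioo a b := mem_Ioo_of_strictMono_of_tendsto hmono hbot htop
  have hclosed : IsClosedEmbedding ((norm ⁻¹' Ioo a b).codRestrict σ hmem) :=
    isClosedEmbedding_codRestrict_preimage hσ continuous_norm.continuousOn hmem
      (isClosedEmbedding_codRestrict_Ioo_of_strictMono hmono hσ.norm hbot htop)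
  have hemb : IsEmbedding σ := IsEmbedding.subtypeVal.comp hclosed.isEmbedding
  exact ⟨hmem, hemb.injective, hσ, hemb, range_codRestrict hmem ▸ hclosed.isClosed_range⟩

section PolarPoint

/-- The point of the Euclidean plane with polar coordinates `(r, θ)`. Negative `r` is allowed and
gives the point opposite to that of `(-r, θ)`. -/
noncomputable def polarPoint (r θ : ℝ) : EuclideanSpace ℝ (Fin 2) :=
  !₂[r * cos θ, r * sin θ]

theorem norm_polarPoint (r θ : ℝ) : ‖polarPoint r θ‖ = |r| := by
  have hsq : (r * cos θ) ^ 2 + (r * sin θ) ^ 2 = r ^ 2 := by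
    linear_combination r ^ 2 * cos_sq_add_sin_sq θ
  simp [polarPoint, EuclideanSpace.norm_eq, hsq, sqrt_sq_eq_abs]

theorem continuous_polarPoint : Continuous fun p : ℝ × ℝ => polarPoint p.1 p.2 := by
  refine (PiLp.continuous_toLp 2 _).comp (continuous_pi fun i => ?_)
  fin_cases i
  · exact continuous_fst.mul (continuous_cos.comp continuous_snd)
  · exact continuous_fst.mul (continuous_sin.comp continuous_snd)

end PolarPoint

section SpiralRadius

/-- The profile `f` of the spiral: `arctan`, rescaled affinely so that its limits at `-∞` and `∞`
are `a` and `b`. -/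
noncomputable def spiralRadius (a b t : ℝ) : ℝ :=
  a + (b - a) * (2 * arctan t + π) / (2 * π)

variable {a b : ℝ}

theorem strictMono_spiralRadius (hab : a < b) : StrictMono (spiralRadius a b) := by
  intro s t hst
  unfold spiralRadius
  gcongr

theorem continuous_spiralRadius (a b : ℝ) : Continuous (spiralRadius a b) := by
  unfold spiralRadius
  fun_prop

theorem tendsto_spiralRadius {l : Filter ℝ} {c : ℝ} (h : Tendsto arctan l (𝓝 c)) :
    Tendsto (spiralRadius a b) l (𝓝 (a + (b - a) * (2 * c + π) / (2 * π))) :=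
  ((((h.const_mul 2).add_const π).const_mul (b - a)).div_const (2 * π)).const_add a

theorem tendsto_spiralRadius_atBot (a b : ℝ) : Tendsto (spiralRadius a b) atBot (𝓝 a) := by
  convert tendsto_spiralRadius (tendsto_nhds_of_tendsto_nhdsWithin tendsto_arctan_atBot) using 2
  ring

theorem tendsto_spiralRadius_atTop (a b : ℝ) : Tendsto (spiralRadius a b) atTop (𝓝 b) := by
  convert tendsto_spiralRadius (tendsto_nhds_of_tendsto_nhdsWithin tendsto_arctan_atTop) using 2
  field_simp
  ring

theorem lt_spiralRadius (hab : a < b) (t : ℝ) : a < spiralRadius a b t :=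
  (mem_Ioo_of_strictMono_of_tendsto (strictMono_spiralRadius hab)
    (tendsto_spiralRadius_atBot a b) (tendsto_spiralRadius_atTop a b) t).1

end SpiralRadius

/-- For `0 < λ₁ < λ₂`, the spiral `σ t = (f t * cos t, f t * sin t)`,
with `f t = λ₁ + (λ₂ − λ₁) * (2 * arctan t + π) / (2 * π)`, viewed as a map into the open
annulus `A = {x : λ₁ < ‖x‖ < λ₂}` of the Euclidean plane, is a closed topological
embedding: it maps into `A`, is injective, continuous, a homeomorphism onto its image,
and its image is a closed subset of `A` (with the subspace topology). Hence the spiral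
is properly embedded in `A`. -/
theorem spiral_closedEmbedding_in_annulus (lam1 lam2 : ℝ) (h1 : 0 < lam1)
    (hlt : lam1 < lam2)
    (f : ℝ → ℝ)
    (hf : ∀ t : ℝ, f t = lam1 + (lam2 - lam1) * (2 * Real.arctan t + π) / (2 * π))
    (σ : ℝ → EuclideanSpace ℝ (Fin 2))
    (hσ : ∀ t : ℝ, σ t = ![f t * Real.cos t, f t * Real.sin t])
    (A : Set (EuclideanSpace ℝ (Fin 2)))
    (hA : A = {x : EuclideanSpace ℝ (Fin 2) | lam1 < ‖x‖ ∧ ‖x‖ < lam2}) :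
    (∀ t : ℝ, σ t ∈ A) ∧
      Function.Injective σ ∧
      Continuous σ ∧
      Topology.IsEmbedding σ ∧
      IsClosed ((Subtype.val : A → EuclideanSpace ℝ (Fin 2)) ⁻¹' Set.range σ) := by
  obtain rfl : f = spiralRadius lam1 lam2 := funext hf
  obtain rfl : σ = fun t => polarPoint (spiralRadius lam1 lam2 t) t :=
    funext fun t => WithLp.ofLp_injective 2 (hσ t)
  have hσc : Continuous fun t => polarPoint (spiralRadius lam1 lam2 t) t :=
    continuous_polarPoint.comp ((continuous_spiralRadius lam1 lam2).prodMk continuous_id)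
  have hnorm (t : ℝ) :
      ‖polarPoint (spiralRadius lam1 lam2 t) t‖ = spiralRadius lam1 lam2 t := by
    rw [norm_polarPoint, abs_of_pos (h1.trans (lt_spiralRadius hlt t))]
  refine spiral_closedEmbedding_in_annulus_general hσc ?_ ?_ ?_ hA <;> simp only [hnorm]
  · exact strictMono_spiralRadius hlt
  · exact tendsto_spiralRadius_atBot lam1 lam2
  · exact tendsto_spiralRadius_atTop lam1 lam2
end
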